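/- arXiv:1512.00247 — 3 statements merged into one kernel-verified Lean document; each statement's English description precedes it below -/
import Mathlib

section
/- Both σ₁ and σ₂ have infinite projective dimension over A: for every natural number n, neither σ₁ nor σ₂ has projective dimension ≤ n as a right A-module. -/
set_option synthInstance.maxHeartbeats 1000000
set_option maxHeartbeats 2000000

open TrivSqZeroExt Matrix

noncomputable section

variable (k : Type) [Field k]

/-- The `k`-subalgebra `A` of the `2 × 2` matrix algebra over the dual numbers `k[ε]`
consisting of those matrices whose two off-diagonal entries have vanishing constant term. -/
def offDiagNilpotentSubalgebra :
    Subalgebra k (Matrix (Fin 2) (Fin 2) (DualNumber k)) where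
  carrier := {M | (M 0 1).fst = 0 ∧ (M 1 0).fst = 0}
  add_mem' := by
    rintro a b ⟨ha1, ha2⟩ ⟨hb1, hb2⟩
    constructor <;> simp_all [Matrix.add_apply]
  mul_mem' := by
    rintro a b ⟨ha1, ha2⟩ ⟨hb1, hb2⟩
    constructor <;>
      simp [Matrix.mul_apply, Fin.sum_univ_two, ha1, ha2, hb1, hb2]
  algebraMap_mem' := by
    intro c
    constructor <;>
      simp [Matrix.algebraMap_matrix_apply]

/-- The four-dimensional algebra `A`. -/
abbrev AAlg := offDiagNilpotentSubalgebra k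

/-- The character of `A` sending a matrix to the constant term of its `(1,1)` entry. -/
def chi1 : AAlg k →+* k where
  toFun a := ((a : Matrix (Fin 2) (Fin 2) (DualNumber k)) 0 0).fst
  map_one' := by simp [Matrix.one_apply]
  map_mul' a b := by
    have hb := b.2.2
    simp [Matrix.mul_apply, Fin.sum_univ_two, hb]
  map_zero' := by simp
  map_add' a b := by simp [Matrix.add_apply]

/-- The character of `A` sending a matrix to the constant term of its `(2,2)` entry. -/
def chi2 : AAlg k →+* k where
  toFun a := ((a : Matrix (Fin 2) (Fin 2) (DualNumber k)) 1 1).fst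
  map_one' := by simp [Matrix.one_apply]
  map_mul' a b := by
    have ha := a.2.2
    simp [Matrix.mul_apply, Fin.sum_univ_two, ha]
  map_zero' := by simp
  map_add' a b := by simp [Matrix.add_apply]

/-- `chi1` as a ring homomorphism on `Aᵐᵒᵖ` (right modules = left `Aᵐᵒᵖ`-modules). -/
def chi1op : (AAlg k)ᵐᵒᵖ →+* k where
  toFun a := chi1 k a.unop
  map_one' := (chi1 k).map_one
  map_mul' _ _ := ((chi1 k).map_mul _ _).trans (mul_comm _ _)
  map_zero' := (chi1 k).map_zero
  map_add' _ _ := (chi1 k).map_add _ _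

/-- `chi2` as a ring homomorphism on `Aᵐᵒᵖ`. -/
def chi2op : (AAlg k)ᵐᵒᵖ →+* k where
  toFun a := chi2 k a.unop
  map_one' := (chi2 k).map_one
  map_mul' _ _ := ((chi2 k).map_mul _ _).trans (mul_comm _ _)
  map_zero' := (chi2 k).map_zero
  map_add' _ _ := (chi2 k).map_add _ _

/-- `σ₁`: the one-dimensional right `A`-module `k` on which a matrix acts by the constant
term of its `(1,1)` entry, realized as a left module over `Aᵐᵒᵖ`. -/
def Sigma1 : Type := k

instance : AddCommGroup (Sigma1 k) := inferInstanceAs (AddCommGroup k)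
instance : Module (AAlg k)ᵐᵒᵖ (Sigma1 k) := Module.compHom k (chi1op k)

/-- `σ₂`: the one-dimensional right `A`-module `k` on which a matrix acts by the constant
term of its `(2,2)` entry, realized as a left module over `Aᵐᵒᵖ`. -/
def Sigma2 : Type := k

instance : AddCommGroup (Sigma2 k) := inferInstanceAs (AddCommGroup k)
instance : Module (AAlg k)ᵐᵒᵖ (Sigma2 k) := Module.compHom k (chi2op k)

/-- `ProjDimLE R n M` means that the `R`-module `M` admits a projective resolution of
length at most `n`: for `n = 0` it means `M` is projective, and for `n + 1` it means there
is a surjection from a projective module onto `M` whose kernel has projective dimension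
at most `n`. -/
def ProjDimLE (R : Type u) [Ring R] : ∀ (n : ℕ) (M : Type v) [AddCommGroup M] [Module R M], Prop
  | 0, M, _, _ => Module.Projective R M
  | n + 1, M, _, _ =>
      ∃ (P : Type v) (_ : AddCommGroup P) (_ : Module R P) (f : P →ₗ[R] M),
        Module.Projective R P ∧ Function.Surjective f ∧
          ProjDimLE R n (LinearMap.ker f)

/-!
Dimension shifting along `0 → Ω → P → M → 0` shows that if `M` is a retract of its syzygy `Ω`, then
finite projective dimension of `M` forces `M` to be projective.

Products of off-diagonal entries of elements of `A` lie in `(ε²) = 0`, so reading off the entry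
`(i, i)` is a ring homomorphism `A → k[ε]`, and `A` acts on `σᵢ` through its constant term. Present
`σᵢ` as a quotient of `A` itself, with kernel the matrices whose entry `(i, i)` lies in `εk[ε]`.
Since `εEᵢᵢ * a` depends only on the constant term of `a i i`, the line spanned by `εEᵢᵢ` is a copy
of `σᵢ` in this kernel, and the `ε`-coefficient of the entry `(i, i)` retracts the kernel onto it.
A splitting of `A → σᵢ` would make `1 ∈ σᵢ` the image of some `e` with `e * εEᵢᵢ = 0`, although the
entry `(i, i)` of that product is `ε`.
-/

section ProjectiveDimension

open CategoryTheory

universe u v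

theorem projective_of_retract_of_hasProjectiveDimensionLE {C : Type u} [Category.{v} C] [Abelian C]
    {S : ShortComplex C} (hS : S.ShortExact) (hP : Projective S.X₂) (hr : Retract S.X₃ S.X₁)
    {n : ℕ} (hn : HasProjectiveDimensionLE S.X₃ n) : Projective S.X₃ := by
  induction n with
  | zero => exact (projective_iff_hasProjectiveDimensionLE_zero _).2 hn
  | succ n ih =>
    have : HasProjectiveDimensionLE S.X₁ n := (hS.hasProjectiveDimensionLT_X₃_iff n hP).1 hn
    exact ih (hr.hasProjectiveDimensionLT (n + 1))

variable {R : Type u} [Ring R] {M : Type v} [AddCommGroup M] [Module R M] {n : ℕ}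

theorem ProjDimLE.hasProjectiveDimensionLE (h : ProjDimLE R n M) :
    HasProjectiveDimensionLE (ModuleCat.of R M) n := by
  induction n generalizing M with
  | zero =>
    have : Module.Projective R M := h
    exact (projective_iff_hasProjectiveDimensionLE_zero _).1 inferInstance
  | succ n ih =>
    obtain ⟨P, _, _, f, _, hf, hK⟩ := h
    exact ((LinearMap.shortExact_shortComplexKer hf).hasProjectiveDimensionLT_X₃_iff n
      (inferInstanceAs (Projective (ModuleCat.of R P)))).2 (ih hK)

theorem ProjDimLE.projective_of_leftInverse_ker [Small.{v} R] {P : Type v} [AddCommGroup P]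
    [Module R P] [Module.Projective R P] {f : P →ₗ[R] M} (hf : Function.Surjective f)
    {i : M →ₗ[R] LinearMap.ker f} {ρ : LinearMap.ker f →ₗ[R] M} (hρ : Function.LeftInverse ρ i)
    (h : ProjDimLE R n M) : Module.Projective R M :=
  (IsProjective.iff_projective M).2 <|
    projective_of_retract_of_hasProjectiveDimensionLE (LinearMap.shortExact_shortComplexKer hf)
      (inferInstanceAs (Projective (ModuleCat.of R P)))
      { i := ModuleCat.ofHom i
        r := ModuleCat.ofHom ρ
        retract := ModuleCat.hom_ext (LinearMap.ext hρ) }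
      h.hasProjectiveDimensionLE

end ProjectiveDimension

open scoped DualNumber

section DualNumberCharacter

universe u v

-- The hypothesis `hπ` presents `M`, identified with `K` by `θ`, as the cyclic module on which `r`
-- acts by the constant term of `φ r`.
variable {R : Type u} [Ring R] {K : Type*} [Ring K] {φ : R →+* K[ε]} {t : R}
  {M : Type v} [AddCommGroup M] [Module R M] {π : R →ₗ[R] M} {θ : M ≃+ K}

theorem surjective_of_apply_eq_fst (hφ : Function.Surjective fun r => (φ r).fst)
    (hπ : ∀ r, θ (π r) = (φ r).fst) : Function.Surjective π := fun m => by
  obtain ⟨r, hr⟩ := hφ (θ m)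
  exact ⟨r, θ.injective ((hπ r).trans hr)⟩

theorem mem_ker_iff_fst_eq_zero (hπ : ∀ r, θ (π r) = (φ r).fst) {r : R} :
    r ∈ LinearMap.ker π ↔ (φ r).fst = 0 := by
  rw [LinearMap.mem_ker, ← hπ, map_eq_zero_iff θ θ.injective]

theorem apply_smul_eq_fst_mul (hφ : Function.Surjective fun r => (φ r).fst)
    (hπ : ∀ r, θ (π r) = (φ r).fst) (r : R) (m : M) : θ (r • m) = (φ r).fst * θ m := by
  obtain ⟨s, rfl⟩ := surjective_of_apply_eq_fst hφ hπ m
  rw [← map_smul, hπ, hπ, smul_eq_mul, map_mul, fst_mul]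

theorem exists_leftInverse_ker_of_dualNumber (hφ : Function.Surjective fun r => (φ r).fst)
    (hφt : φ t = ε) (ht : ∀ r, (φ r).fst = 0 → r * t = 0) (hπ : ∀ r, θ (π r) = (φ r).fst) :
    ∃ (i : M →ₗ[R] LinearMap.ker π) (ρ : LinearMap.ker π →ₗ[R] M), Function.LeftInverse ρ i := by
  have hπ_surj : Function.Surjective π := surjective_of_apply_eq_fst hφ hπ
  have hker {r : R} : r ∈ LinearMap.ker π ↔ (φ r).fst = 0 := mem_ker_iff_fst_eq_zero hπ
  let τ : LinearMap.ker π := ⟨t, hker.2 (by rw [hφt, DualNumber.fst_eps])⟩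
  have hτ : LinearMap.ker π ≤ LinearMap.ker (LinearMap.toSpanSingleton R _ τ) :=
    fun r hr => Subtype.ext (ht r (hker.1 hr))
  let i : M →ₗ[R] LinearMap.ker π :=
    (LinearMap.ker π).liftQ _ hτ ∘ₗ (π.quotKerEquivOfSurjective hπ_surj).symm
  have hi (r : R) : i (π r) = r • τ :=
    congrArg (Submodule.liftQ _ _ hτ) (π.quotKerEquivOfSurjective_symm_apply hπ_surj r)
  let ρ : LinearMap.ker π →ₗ[R] M :=
    { toFun x := θ.symm (φ x).snd
      map_add' x y := by simp
      map_smul' r x := θ.injective (by simp [apply_smul_eq_fst_mul hφ hπ, hker.1 x.2]) }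
  refine ⟨i, ρ, fun m => ?_⟩
  obtain ⟨r, rfl⟩ := hπ_surj m
  rw [hi]
  exact θ.injective (by simp [ρ, τ, hφt, hπ])

theorem not_projective_of_dualNumber [Nontrivial K]
    (hφ : Function.Surjective fun r => (φ r).fst) (hφt : φ t = ε)
    (hπ : ∀ r, θ (π r) = (φ r).fst) : ¬ Module.Projective R M := by
  intro _
  obtain ⟨s, hs⟩ := Module.projective_lifting_property π LinearMap.id
    (surjective_of_apply_eq_fst hφ hπ)
  have he : (φ (s (π 1))).fst = 1 := by
    rw [← hπ, show π (s (π 1)) = π 1 from LinearMap.congr_fun hs (π 1), hπ, map_one, fst_one]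
  have hte : t * s (π 1) = 0 := by
    have htπ : t • π 1 = 0 := θ.injective (by simp [apply_smul_eq_fst_mul hφ hπ, hφt])
    rw [← smul_eq_mul, ← map_smul, htπ, map_zero]
  have : (1 : K) = 0 := by simpa [hφt, he] using congrArg (fun r => (φ r).snd) hte
  exact one_ne_zero this

theorem not_projDimLE_of_dualNumber {M : Type u} [AddCommGroup M] [Module R M] {π : R →ₗ[R] M}
    {θ : M ≃+ K} [Nontrivial K] (hφ : Function.Surjective fun r => (φ r).fst) (hφt : φ t = ε)
    (ht : ∀ r, (φ r).fst = 0 → r * t = 0) (hπ : ∀ r, θ (π r) = (φ r).fst) (n : ℕ) :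
    ¬ ProjDimLE R n M := fun h => by
  obtain ⟨_, _, hρ⟩ := exists_leftInverse_ker_of_dualNumber hφ hφt ht hπ
  exact not_projective_of_dualNumber hφ hφt hπ
    (h.projective_of_leftInverse_ker (surjective_of_apply_eq_fst hφ hπ) hρ)

end DualNumberCharacter

/-- The ring homomorphism `A → k[ε]` reading off the diagonal entry `(i, i)`; its constant term is
the character of `σᵢ`. -/
def diagEntry (i : Fin 2) : AAlg k →+* k[ε] where
  toFun a := (a : Matrix (Fin 2) (Fin 2) k[ε]) i i
  map_one' := by simp
  map_mul' a b := by
    obtain ⟨a, ha₁, ha₂⟩ := a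
    obtain ⟨b, hb₁, hb₂⟩ := b
    fin_cases i <;> ext <;> simp [Matrix.mul_apply, ha₁, ha₂, hb₁, hb₂]
  map_zero' := by simp
  map_add' a b := by simp

/-- The element `εEᵢᵢ` of `A`, which spans a copy of `σᵢ` inside `A`. -/
def epsSingle (i : Fin 2) : AAlg k :=
  ⟨single i i ε, by constructor <;> fin_cases i <;> simp⟩

variable {k}

theorem fst_diagEntry_surjective (i : Fin 2) :
    Function.Surjective fun a => (diagEntry k i a).fst := fun c =>
  ⟨algebraMap k (AAlg k) c, by
    change (algebraMap k (Matrix (Fin 2) (Fin 2) k[ε]) c i i).fst = c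
    simp [algebraMap_matrix_apply, algebraMap_eq_inl]⟩

theorem diagEntry_epsSingle (i : Fin 2) : diagEntry k i (epsSingle k i) = ε :=
  single_apply_same ..

theorem fst_apply_eq_zero_of_ne (a : AAlg k) {i j : Fin 2} (hij : i ≠ j) :
    ((a : Matrix (Fin 2) (Fin 2) k[ε]) i j).fst = 0 := by
  fin_cases i <;> fin_cases j
  exacts [absurd rfl hij, a.2.1, a.2.2, absurd rfl hij]

theorem epsSingle_mul_eq_zero {i : Fin 2} {a : AAlg k} (ha : (diagEntry k i a).fst = 0) :
    epsSingle k i * a = 0 := by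
  have hrow (j : Fin 2) : ((a : Matrix (Fin 2) (Fin 2) k[ε]) i j).fst = 0 := by
    obtain rfl | hij := eq_or_ne i j
    exacts [ha, fst_apply_eq_zero_of_ne a hij]
  refine Subtype.ext (Matrix.ext fun l j => ?_)
  change (single i i ε * (a : Matrix (Fin 2) (Fin 2) k[ε]) : Matrix _ _ k[ε]) l j = 0
  obtain rfl | hil := eq_or_ne i l
  · ext <;> simp [hrow]
  · exact single_mul_apply_of_ne _ _ _ _ _ hil.symm _

theorem not_projDimLE_of_smul_eq_diagEntry {M : Type} [AddCommGroup M] [Module (AAlg k)ᵐᵒᵖ M]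
    (i : Fin 2) (θ : M ≃+ k)
    (hθ : ∀ (a : (AAlg k)ᵐᵒᵖ) (m : M), θ (a • m) = (diagEntry k i a.unop).fst * θ m) (n : ℕ) :
    ¬ ProjDimLE (AAlg k)ᵐᵒᵖ n M :=
  not_projDimLE_of_dualNumber (φ := (diagEntry k i).fromOpposite fun _ _ => Commute.all _ _)
    (t := .op (epsSingle k i)) (π := LinearMap.toSpanSingleton _ M (θ.symm 1)) (θ := θ)
    ((fst_diagEntry_surjective i).comp MulOpposite.unop_surjective) (diagEntry_epsSingle i)
    (fun _ ha => MulOpposite.unop_injective (epsSingle_mul_eq_zero ha))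
    (fun a => by simp [hθ]) n

variable (k)

/-- Both `σ₁` and `σ₂` have infinite projective dimension as right
`A`-modules: for every natural number `n`, neither has projective dimension `≤ n`. -/
theorem sigma_infinite_projective_dimension (n : ℕ) :
    ¬ ProjDimLE (AAlg k)ᵐᵒᵖ n (Sigma1 k) ∧ ¬ ProjDimLE (AAlg k)ᵐᵒᵖ n (Sigma2 k) :=
  ⟨not_projDimLE_of_smul_eq_diagEntry (M := Sigma1 k) 0 (AddEquiv.refl k) (fun _ _ => rfl) n,
    not_projDimLE_of_smul_eq_diagEntry (M := Sigma2 k) 1 (AddEquiv.refl k) (fun _ _ => rfl) n⟩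
end
end

section
/- For every natural number i, the k-vector space Ext^i_R(k_ψ, k_ψ) has dimension equal to the binomial coefficient C(n, i). In particular Ext^n_R(k_ψ, k_ψ) ≠ 0 and Ext^i_R(k_ψ, k_ψ) = 0 for i > n. -/
open CategoryTheory

noncomputable section

/-- The Laurent polynomial algebra `k[X₁^{±1}, …, Xₙ^{±1}]`, realized as the group algebra
of the free abelian group `ℤⁿ` over `k`. -/
abbrev LaurentAlgebra (k : Type) [Field k] (n : ℕ) : Type :=
  AddMonoidAlgebra k (Fin n → ℤ)

/-!
The elements `X_j - ψ(X_j)` generate `ker ψ`, and each initial segment of them generates the kernel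
of the endomorphism of `R` that specializes the corresponding variables to their values under `ψ`.
As `R` is a domain, these kernels are prime, so the `X_j - ψ(X_j)` form a regular sequence. When `r`
is regular on `M` and kills `N`, the long exact sequence of `0 → M → M → M/rM → 0` splits into
`0 → Ext^i(M, N) → Ext^{i+1}(M/rM, N) → Ext^{i+1}(M, N) → 0`. Starting from `M = R`, the dimensions
are therefore governed by Pascal's rule.
-/

section ExtComparison

universe w v u

variable {C : Type u} [Category.{v} C] [Abelian C] [HasExt.{w} C] {X : C}

open CochainComplex HomComplex in
theorem extMk_eq_zero_iff_exists (P : ProjectiveResolution X) {Y : C} {n m : ℕ}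
    (f : P.complex.X n ⟶ Y) (hm : n + 1 = m) (hf : P.complex.d m n ≫ f = 0) :
    P.extMk f m hm hf = 0 ↔
      ∃ g : P.complex.X ((ComplexShape.up ℕ).prev n) ⟶ Y, P.complex.d n _ ≫ g = f := by
  cases n with
  | succ p => rw [CochainComplex.prev_nat_succ]; exact P.extMk_eq_zero_iff f m hm hf p rfl
  | zero =>
    -- In degree `0` there are no coboundaries: both sides say that `f = 0`.
    have isZero_X_one : Limits.IsZero (P.cochainComplex.X 1) :=
      P.cochainComplex.isZero_of_isStrictlyLE 0 1 (by norm_num)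
    have d_zero : P.complex.d 0 ((ComplexShape.up ℕ).prev 0) = 0 := P.complex.shape _ _ (by simp)
    simp only [d_zero, Limits.zero_comp, exists_const]
    rw [← P.extEquivCohomologyClass.apply_eq_iff_eq, P.extEquivCohomologyClass_extMk,
      P.extEquivCohomologyClass_zero, CohomologyClass.mk_eq_zero_iff,
      Cocycle.toSingleMk_mem_coboundaries_iff _ _ _ _ _ (1 : ℤ) (by norm_num)]
    simp only [isZero_X_one.eq_of_tgt (P.cochainComplex.d _ 1) 0, Limits.zero_comp, exists_const]
    rw [← cancel_epi (P.cochainComplexXIso (-(0 : ℕ)) 0 rfl).hom]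
    simp

theorem smul_extMk {k : Type*} [Ring k] [Linear k C] (P : ProjectiveResolution X) {Y : C}
    {n m : ℕ} (r : k) (f : P.complex.X n ⟶ Y) (hm : n + 1 = m) (hf : P.complex.d m n ≫ f = 0) :
    r • P.extMk f m hm hf =
      P.extMk (r • f) m hm ((Linear.comp_smul ..).trans (by rw [hf, smul_zero])) := by
  simp only [Abelian.Ext.smul_eq_comp_mk₀, P.extMk_comp_mk₀, Linear.comp_smul, Category.comp_id]

variable (k : Type*) [CommRing k] [Linear k C] (P : ProjectiveResolution X) (Y : C) (n : ℕ)

/-- The map sending a degree `n` cocycle of `Hom(P, Y)`, for `P` a projective resolution of `X`, to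
the class in `Abelian.Ext X Y n` that it represents. -/
def cocyclesToExt :
    LinearMap.ker ((P.complex.linearYonedaObj k Y).sc n).g.hom →ₗ[k] Abelian.Ext X Y n where
  toFun f := P.extMk f.1 _ (CochainComplex.next ℕ n).symm f.2
  map_add' _ _ := (P.add_extMk ..).symm
  map_smul' r _ := (smul_extMk P r ..).symm

theorem cocyclesToExt_surjective : Function.Surjective (cocyclesToExt k P Y n) := fun x ↦ by
  obtain ⟨f, hf, rfl⟩ := P.extMk_surjective x _ (CochainComplex.next ℕ n).symm
  exact ⟨⟨f, hf⟩, rfl⟩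

theorem ker_cocyclesToExt :
    LinearMap.ker (cocyclesToExt k P Y n) =
      LinearMap.range ((P.complex.linearYonedaObj k Y).sc n).moduleCatToCycles := by
  ext f
  exact (extMk_eq_zero_iff_exists P f.1 (CochainComplex.next ℕ n).symm f.2).trans
    (exists_congr fun _ ↦ ⟨fun h ↦ Subtype.ext h, congrArg Subtype.val⟩)

variable (X) in
/-- The comparison between `Ext` as a left derived functor and `Ext` as morphisms in the derived
category, which is the version that comes with long exact sequences. -/
def extLinearEquiv [EnoughProjectives C] :
    ((Ext k C n).obj (Opposite.op X)).obj Y ≃ₗ[k] Abelian.Ext X Y n :=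
  let P := ProjectiveResolution.of X
  (P.isoExt n Y ≪≫ ((P.complex.linearYonedaObj k Y).sc n).moduleCatHomologyIso).toLinearEquiv ≪≫ₗ
    Submodule.quotEquivOfEq _ _ (ker_cocyclesToExt k P Y n).symm ≪≫ₗ
    (cocyclesToExt k P Y n).quotKerEquivOfSurjective (cocyclesToExt_surjective k P Y n)

end ExtComparison

section ExtRank

universe w v u

variable {C : Type u} [Category.{v} C] [Abelian C] [HasExt.{w} C]

theorem rank_ext_congr (k : Type*) [CommRing k] [Linear k C] {X X' : C} (e : X ≅ X') (Y : C)
    (i : ℕ) : Module.rank k (Abelian.Ext X Y i) = Module.rank k (Abelian.Ext X' Y i) :=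
  (LinearEquiv.ofBijective ((Abelian.Ext.mk₀ e.inv).precompOfLinear k Y (zero_add i))
    (Function.bijective_iff_has_inverse.2
      ⟨fun α ↦ (Abelian.Ext.mk₀ e.hom).comp α (zero_add i), fun _ ↦ by simp,
        fun _ ↦ by simp⟩)).rank_eq

variable (k : Type*) {S : ShortComplex C} {Y : C}

theorem rank_ext_zero_of_shortExact_of_comp_eq_zero [CommRing k] [Linear k C] (hS : S.ShortExact)
    (hf : ∀ α : Abelian.Ext S.X₂ Y 0, (Abelian.Ext.mk₀ S.f).comp α (zero_add 0) = 0) :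
    Module.rank k (Abelian.Ext S.X₃ Y 0) = Module.rank k (Abelian.Ext S.X₂ Y 0) := by
  have := hS.epi_g
  exact (LinearEquiv.ofBijective ((Abelian.Ext.mk₀ S.g).precompOfLinear k Y (zero_add 0))
    ⟨Abelian.Ext.precomp_mk₀_injective_of_epi Y S.g,
      fun α ↦ Abelian.Ext.contravariant_sequence_exact₂ hS Y α (hf α)⟩).rank_eq

theorem rank_ext_succ_of_shortExact_of_comp_eq_zero [Field k] [Linear k C] (hS : S.ShortExact)
    {i : ℕ} (hf : ∀ α : Abelian.Ext S.X₂ Y i, (Abelian.Ext.mk₀ S.f).comp α (zero_add i) = 0)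
    (hf' : ∀ α : Abelian.Ext S.X₂ Y (i + 1),
      (Abelian.Ext.mk₀ S.f).comp α (zero_add (i + 1)) = 0) :
    Module.rank k (Abelian.Ext S.X₃ Y (i + 1)) =
      Module.rank k (Abelian.Ext S.X₁ Y i) + Module.rank k (Abelian.Ext S.X₂ Y (i + 1)) := by
  let δ := hS.extClass.precompOfLinear k Y (add_comm 1 i)
  let g := (Abelian.Ext.mk₀ S.g).precompOfLinear k Y (zero_add (i + 1))
  have g_surjective : Function.Surjective g := fun α ↦
    Abelian.Ext.contravariant_sequence_exact₂ hS Y α (hf' α)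
  have δ_injective : Function.Injective δ := by
    refine (injective_iff_map_eq_zero δ).2 fun α hα ↦ ?_
    obtain ⟨β, rfl⟩ := Abelian.Ext.contravariant_sequence_exact₁ hS Y α (add_comm 1 i) hα
    exact hf β
  have range_δ : LinearMap.range δ = LinearMap.ker g := by
    refine le_antisymm ?_ fun α hα ↦
      Abelian.Ext.contravariant_sequence_exact₃ hS Y α hα (add_comm 1 i)
    rintro _ ⟨α, rfl⟩
    exact hS.comp_extClass_assoc α (add_comm _ _)
  rw [LinearMap.rank_eq_of_surjective g_surjective, ← range_δ,
    rank_range_of_injective δ δ_injective, add_comm]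

end ExtRank

section RegularSequence

open RingTheory.Sequence

universe v u

variable {R : Type u} [CommRing R] [Small.{v} R]

theorem mk₀_smul_id_comp_eq_zero_of_mem_annihilator {M N : ModuleCat.{v} R} {r : R}
    (hr : r ∈ Module.annihilator R N) {i : ℕ} (α : Abelian.Ext M N i) :
    (Abelian.Ext.mk₀ (r • 𝟙 M)).comp α (zero_add i) = 0 := by
  have smul_id_eq_zero : r • 𝟙 N = 0 := by
    simp [← ModuleCat.lsmul_eq_smul_id, Module.mem_annihilator_iff_lsmul_eq_zero.mp hr]
  rw [Abelian.Ext.mk₀_smul, Abelian.Ext.smul_comp, Abelian.Ext.mk₀_id_comp,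
    Abelian.Ext.smul_eq_comp_mk₀, smul_id_eq_zero, Abelian.Ext.mk₀_zero, Abelian.Ext.comp_zero]

variable (k : Type*) [Field k] [Algebra k R]

theorem rank_ext_quotSMulTop_zero {M N : ModuleCat.{v} R} {r : R} (hM : IsSMulRegular M r)
    (hr : r ∈ Module.annihilator R N) :
    Module.rank k (Abelian.Ext (ModuleCat.of R (QuotSMulTop r M)) N 0) =
      Module.rank k (Abelian.Ext M N 0) :=
  rank_ext_zero_of_shortExact_of_comp_eq_zero k hM.smulShortComplex_shortExact
    (mk₀_smul_id_comp_eq_zero_of_mem_annihilator hr)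

theorem rank_ext_quotSMulTop_succ {M N : ModuleCat.{v} R} {r : R} (hM : IsSMulRegular M r)
    (hr : r ∈ Module.annihilator R N) (i : ℕ) :
    Module.rank k (Abelian.Ext (ModuleCat.of R (QuotSMulTop r M)) N (i + 1)) =
      Module.rank k (Abelian.Ext M N i) + Module.rank k (Abelian.Ext M N (i + 1)) :=
  rank_ext_succ_of_shortExact_of_comp_eq_zero k hM.smulShortComplex_shortExact
    (mk₀_smul_id_comp_eq_zero_of_mem_annihilator hr)
    (mk₀_smul_id_comp_eq_zero_of_mem_annihilator hr)

theorem rank_ext_quotient_ofList {M : Type v} [AddCommGroup M] [Module R M] {N : ModuleCat.{v} R}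
    [Projective (ModuleCat.of R M)] {rs : List R} (hM : IsWeaklyRegular M rs)
    (hN : ∀ r ∈ rs, r ∈ Module.annihilator R N) (i : ℕ) :
    Module.rank k
        (Abelian.Ext (ModuleCat.of R (M ⧸ (Ideal.ofList rs • ⊤ : Submodule R M))) N i) =
      rs.length.choose i * Module.rank k (ModuleCat.of R M ⟶ N) := by
  induction rs using List.reverseRecOn generalizing i with
  | nil =>
    have e : (M ⧸ ((Ideal.ofList [] : Ideal R) • ⊤ : Submodule R M)) ≃ₗ[R] M :=
      Submodule.quotEquivOfEqBot _ (by rw [Ideal.ofList_nil, Submodule.bot_smul])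
    rw [rank_ext_congr k e.toModuleIso]
    cases i with
    | zero => simpa using (Abelian.Ext.linearEquiv₀ (R := k)).rank_eq
    | succ i =>
      have := Abelian.Ext.subsingleton_of_projective (ModuleCat.of R M) N i
      simp
  | append_singleton rs r ih =>
    rw [isWeaklyRegular_append_iff, isWeaklyRegular_singleton_iff] at hM
    simp only [List.mem_append, List.mem_singleton, or_imp, forall_and, forall_eq] at hN
    have e : (M ⧸ (Ideal.ofList (rs ++ [r]) • ⊤ : Submodule R M)) ≃ₗ[R]
        QuotSMulTop r (M ⧸ (Ideal.ofList rs • ⊤ : Submodule R M)) :=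
      Submodule.quotEquivOfEq _ _ (by simp [sup_comm]) ≪≫ₗ
        Submodule.quotOfListConsSMulTopEquivQuotSMulTopOuter M r rs
    rw [rank_ext_congr k e.toModuleIso, List.length_append, List.length_singleton]
    cases i with
    | zero =>
      rw [rank_ext_quotSMulTop_zero (M := ModuleCat.of R (M ⧸ _)) k hM.2 hN.2, ih hM.1 hN.1,
        Nat.choose_zero_right, Nat.choose_zero_right]
    | succ i =>
      rw [rank_ext_quotSMulTop_succ (M := ModuleCat.of R (M ⧸ _)) k hM.2 hN.2, ih hM.1 hN.1,
        ih hM.1 hN.1, Nat.choose_succ_succ, Nat.cast_add, add_mul]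

theorem isWeaklyRegular_ofFn_of_isPrime {A : Type*} [CommRing A] {n : ℕ} {f : Fin n → A}
    (prime : ∀ i, (Ideal.span (f '' Set.Iio i)).IsPrime)
    (notMem : ∀ i, f i ∉ Ideal.span (f '' Set.Iio i)) : IsWeaklyRegular A (List.ofFn f) := by
  refine ⟨fun i hi ↦ ?_⟩
  obtain ⟨i, rfl⟩ : ∃ j : Fin n, (j : ℕ) = i := ⟨⟨i, by simpa using hi⟩, rfl⟩
  have mem_take (a : A) : a ∈ (List.ofFn f).take i ↔ a ∈ f '' Set.Iio i := by
    simp only [List.mem_take_iff_getElem, List.getElem_ofFn, Set.mem_image, Set.mem_Iio,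
      List.length_ofFn, lt_min_iff]
    exact ⟨fun ⟨j, hj, h⟩ ↦ ⟨⟨j, hj.2⟩, hj.1, h⟩, fun ⟨j, hj, h⟩ ↦ ⟨j, ⟨hj, j.2⟩, h⟩⟩
  have ofList_take : Ideal.ofList ((List.ofFn f).take i) = Ideal.span (f '' Set.Iio i) :=
    congrArg Ideal.span (Set.ext mem_take)
  rw [ofList_take, smul_eq_mul, Ideal.mul_top, isSMulRegular_quotient_iff_mem_of_smul_mem,
    List.getElem_ofFn]
  exact fun x hx ↦ ((prime i).mem_or_mem hx).resolve_left (notMem i)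

end RegularSequence

section CharacterModule

open RingTheory.Sequence
open scoped ModuleCat

universe u

variable {k R : Type u} [Field k] [CommRing R] [Algebra k R] (ψ : R →ₐ[k] k)

/-- The one-dimensional module `k_ψ`: the field `k` with `R` acting through `ψ`. -/
def characterModule : ModuleCat.{u} R :=
  (ModuleCat.restrictScalars ψ.toRingHom).obj (ModuleCat.of k k)

theorem mem_annihilator_characterModule {r : R} (hr : r ∈ RingHom.ker ψ) :
    r ∈ Module.annihilator R (characterModule ψ) :=
  Module.mem_annihilator.2 fun (v : k) ↦
    (congrArg (· * v) (RingHom.mem_ker.1 hr)).trans (zero_mul v)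

/-- The isomorphism `R ⧸ ker ψ ≃ k_ψ` induced by `ψ`. -/
def quotKerEquivCharacterModule : (R ⧸ RingHom.ker ψ) ≃ₗ[R] characterModule ψ :=
  letI toCharacterModule : R →ₗ[R] characterModule ψ :=
    LinearMap.toSpanSingleton R (characterModule ψ) (1 : k)
  have apply (r : R) : toCharacterModule r = ψ r := mul_one (ψ r)
  Submodule.quotEquivOfEq _ _ (by ext r; rw [RingHom.mem_ker, LinearMap.mem_ker, apply]; rfl) ≪≫ₗ
    toCharacterModule.quotKerEquivOfSurjective fun c ↦
      ⟨algebraMap k R c, (apply _).trans (ψ.commutes c)⟩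

theorem rank_hom_characterModule :
    Module.rank k (ModuleCat.of R R ⟶ characterModule ψ) = 1 := by
  have e : characterModule ψ ≃ₗ[k] k :=
    { (AddEquiv.refl k : characterModule ψ ≃+ k) with
      map_smul' c (v : k) := congrArg (· * v) (ψ.commutes c) }
  rw [(ModuleCat.homLinearEquiv (S := k) ≪≫ₗ LinearMap.ringLmapEquivSelf R k _ ≪≫ₗ e).rank_eq,
    Module.rank_self]

theorem rank_ext_characterModule {rs : List R} (regular : IsWeaklyRegular R rs)
    (ker_eq : RingHom.ker ψ = Ideal.ofList rs) (i : ℕ) :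
    Module.rank k (Abelian.Ext (characterModule ψ) (characterModule ψ) i) =
      rs.length.choose i := by
  have e : (R ⧸ (Ideal.ofList rs • ⊤ : Ideal R)) ≃ₗ[R] characterModule ψ :=
    Submodule.quotEquivOfEq _ _ (by simp [ker_eq]) ≪≫ₗ quotKerEquivCharacterModule ψ
  have annihilates : ∀ r ∈ rs, r ∈ Module.annihilator R (characterModule ψ) := fun r hr ↦
    mem_annihilator_characterModule ψ (ker_eq ▸ Ideal.subset_span hr)
  rw [rank_ext_congr k e.symm.toModuleIso, rank_ext_quotient_ofList k regular annihilates,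
    rank_hom_characterModule, mul_one]

end CharacterModule

section Indicator

variable {ι M : Type*} [DecidableEq ι] [Zero M] {s : Set ι} {j : ι}

theorem indicator_single_of_mem (hj : j ∈ s) (a : M) :
    s.indicator (Pi.single j a) = Pi.single j a :=
  Set.indicator_eq_self.2 (Pi.support_single_subset.trans (Set.singleton_subset_iff.2 hj))

theorem indicator_single_of_notMem (hj : j ∉ s) (a : M) : s.indicator (Pi.single j a) = 0 :=
  Set.indicator_eq_zero'.2 <|
    Set.disjoint_of_subset_left Pi.support_single_subset (Set.disjoint_singleton_left.2 hj)

end Indicator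

section Laurent

open AddMonoidAlgebra RingTheory.Sequence

variable {k : Type*} {ι : Type*} [DecidableEq ι]

/-- The variable `X_j` of the Laurent polynomial algebra in variables indexed by `ι`. -/
def laurentX (k : Type*) [Semiring k] (j : ι) : k[ι → ℤ] :=
  single (Pi.single j 1) 1

theorem algHom_ext_of_laurentX [Finite ι] [CommSemiring k] {B : Type*} [CommSemiring B]
    [Algebra k B] {f g : k[ι → ℤ] →ₐ[k] B} (h : ∀ j, f (laurentX k j) = g (laurentX k j)) :
    f = g := by
  refine algHom_ext' (Multiplicative.monoidHom_ext _ _ ?_) (Subsingleton.elim _ _)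
  ext j
  exact h j

variable [CommRing k]

theorem ker_eq_of_forall_laurentX_sub_mem [Finite ι] {φ : k[ι → ℤ] →ₐ[k] k[ι → ℤ]}
    {I : Ideal k[ι → ℤ]} (hI : I ≤ RingHom.ker φ)
    (h : ∀ j, laurentX k j - φ (laurentX k j) ∈ I) : RingHom.ker φ = I := by
  refine le_antisymm (fun f (hf : φ f = 0) ↦ ?_) hI
  have mk_comp : (Ideal.Quotient.mkₐ k I).comp φ = Ideal.Quotient.mkₐ k I :=
    algHom_ext_of_laurentX fun j ↦ (Ideal.Quotient.eq.2 (h j)).symm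
  rw [← Ideal.Quotient.eq_zero_iff_mem, ← Ideal.Quotient.mkₐ_eq_mk k, ← mk_comp,
    AlgHom.comp_apply, hf, map_zero]

variable (ψ : k[ι → ℤ] →ₐ[k] k) {s : Set ι} {j : ι}

/-- The endomorphism of the Laurent polynomial algebra that specializes `X_j` to `ψ(X_j)` for
`j ∈ s` and fixes the other variables. -/
def partialEval (s : Set ι) : k[ι → ℤ] →ₐ[k] k[ι → ℤ] :=
  lift k _ _
    { toFun a := single (sᶜ.indicator a.toAdd) (ψ (single (s.indicator a.toAdd) 1))
      map_one' := by simp [← one_def]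
      map_mul' a b := by simp [single_mul_single, Set.indicator_add', ← map_mul] }

theorem partialEval_laurentX_of_mem (hj : j ∈ s) :
    partialEval ψ s (laurentX k j) = algebraMap k _ (ψ (laurentX k j)) := by
  simp [partialEval, laurentX, indicator_single_of_mem hj,
    indicator_single_of_notMem (s := sᶜ) (not_not_intro hj)]

theorem partialEval_laurentX_of_notMem (hj : j ∉ s) :
    partialEval ψ s (laurentX k j) = laurentX k j := by
  simp [partialEval, laurentX, indicator_single_of_notMem hj,
    indicator_single_of_mem (s := sᶜ) hj, ← one_def]

/-- The element `X_j - ψ(X_j)` of the kernel of `ψ`. -/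
def shiftedLaurentX (j : ι) : k[ι → ℤ] :=
  laurentX k j - algebraMap k _ (ψ (laurentX k j))

theorem ker_partialEval [Finite ι] (s : Set ι) :
    RingHom.ker (partialEval ψ s) = Ideal.span (shiftedLaurentX ψ '' s) := by
  refine ker_eq_of_forall_laurentX_sub_mem (Ideal.span_le.2 ?_) fun j ↦ ?_
  · rintro _ ⟨j, hj, rfl⟩
    change partialEval ψ s (laurentX k j - _) = 0
    rw [map_sub, partialEval_laurentX_of_mem ψ hj, AlgHom.commutes, sub_self]
  · by_cases hj : j ∈ s
    · rw [partialEval_laurentX_of_mem ψ hj]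
      exact Ideal.subset_span ⟨j, hj, rfl⟩
    · rw [partialEval_laurentX_of_notMem ψ hj, sub_self]
      exact zero_mem _

theorem ker_eq_span_range_shiftedLaurentX [Finite ι] :
    RingHom.ker ψ = Ideal.span (Set.range (shiftedLaurentX ψ)) := by
  have partialEval_univ :
      partialEval ψ Set.univ = (Algebra.ofId k k[ι → ℤ]).comp ψ :=
    algHom_ext_of_laurentX fun j ↦ partialEval_laurentX_of_mem ψ (Set.mem_univ j)
  rw [← Set.image_univ, ← ker_partialEval, partialEval_univ]
  ext f
  simp [Algebra.ofId_apply, RingHom.mem_ker]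

theorem shiftedLaurentX_ne_zero [Nontrivial k] (j : ι) : shiftedLaurentX ψ j ≠ 0 := by
  have coeff_eq_one : (shiftedLaurentX ψ j).coeff (Pi.single j 1) = 1 := by
    simp [shiftedLaurentX, laurentX]
  intro h
  simp [h] at coeff_eq_one

theorem shiftedLaurentX_notMem_span [Finite ι] [Nontrivial k] (hj : j ∉ s) :
    shiftedLaurentX ψ j ∉ Ideal.span (shiftedLaurentX ψ '' s) := by
  rw [← ker_partialEval, RingHom.mem_ker, shiftedLaurentX, map_sub,
    partialEval_laurentX_of_notMem ψ hj, AlgHom.commutes]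
  exact shiftedLaurentX_ne_zero ψ j

theorem isWeaklyRegular_ofFn_shiftedLaurentX [IsDomain k] {n : ℕ}
    (ψ : k[Fin n → ℤ] →ₐ[k] k) :
    IsWeaklyRegular k[Fin n → ℤ] (List.ofFn (shiftedLaurentX ψ)) :=
  isWeaklyRegular_ofFn_of_isPrime
    (fun i ↦ ker_partialEval ψ (Set.Iio i) ▸ RingHom.ker_isPrime _)
    (fun _ ↦ shiftedLaurentX_notMem_span ψ Set.self_notMem_Iio)

theorem ker_eq_ofList_ofFn_shiftedLaurentX {n : ℕ} (ψ : k[Fin n → ℤ] →ₐ[k] k) :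
    RingHom.ker ψ = Ideal.ofList (List.ofFn (shiftedLaurentX ψ)) :=
  (ker_eq_span_range_shiftedLaurentX ψ).trans <|
    congrArg Ideal.span (Set.ext fun _ ↦ List.mem_ofFn.symm)

end Laurent

/-- Let `k` be a field, `n` a natural number, `R = k[X₁^{±1}, …, Xₙ^{±1}]`,
and `ψ : R → k` a `k`-algebra homomorphism; let `k_ψ` be the one-dimensional `R`-module `k`
with `R` acting through `ψ`.  Then for every `i`, the `k`-vector space `Ext^i_R(k_ψ, k_ψ)`
has dimension `C(n, i)`; in particular `Ext^n_R(k_ψ, k_ψ) ≠ 0`, and `Ext^i_R(k_ψ, k_ψ) = 0`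
for `i > n`. -/
theorem ext_laurent_character_dim_choose (k : Type) [Field k] (n : ℕ)
    (ψ : LaurentAlgebra k n →ₐ[k] k) :
    letI : Module (LaurentAlgebra k n) k := Module.compHom k ψ.toRingHom
    (∀ i : ℕ,
      Nonempty
        ((((Ext k (ModuleCat (LaurentAlgebra k n)) i).obj
            (Opposite.op (ModuleCat.of (LaurentAlgebra k n) k))).obj
          (ModuleCat.of (LaurentAlgebra k n) k)) ≃ₗ[k] (Fin (n.choose i) → k))) ∧
    Nontrivial
      (((Ext k (ModuleCat (LaurentAlgebra k n)) n).obj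
          (Opposite.op (ModuleCat.of (LaurentAlgebra k n) k))).obj
        (ModuleCat.of (LaurentAlgebra k n) k)) ∧
    (∀ i : ℕ, n < i →
      Subsingleton
        (((Ext k (ModuleCat (LaurentAlgebra k n)) i).obj
            (Opposite.op (ModuleCat.of (LaurentAlgebra k n) k))).obj
          (ModuleCat.of (LaurentAlgebra k n) k))) := by
  have rank_ext (i : ℕ) :=
    (extLinearEquiv (characterModule ψ) k (characterModule ψ) i).rank_eq.trans
      (rank_ext_characterModule ψ (isWeaklyRegular_ofFn_shiftedLaurentX ψ)
        (ker_eq_ofList_ofFn_shiftedLaurentX ψ) i)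
  simp only [List.length_ofFn] at rank_ext
  have e (i : ℕ) := finDimVectorspaceEquiv _ (rank_ext i)
  refine ⟨fun i ↦ ⟨e i⟩, ?_, fun i hi ↦ ?_⟩
  · have e_top := e n
    rw [Nat.choose_self] at e_top
    exact e_top.toEquiv.nontrivial
  · have e_above := e i
    rw [Nat.choose_eq_zero_of_lt hi] at e_above
    exact e_above.toEquiv.subsingleton
end
end

section
/- The module k_ψ has projective dimension exactly n over R: it has projective dimension ≤ n, and does not have projective dimension ≤ n − 1 when n ≥ 1. -/
/-!
Let `g₁, …, gₙ` be a basis of a free abelian group `G`. The elements `X^gᵢ - ψ(X^gᵢ)` generate the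
kernel of `ψ : k[G] → k`, and they form a regular sequence: twisting by `ψ` identifies the quotient
of `k[G]` by the first `i` of them with `k[G ⧸ ⟨g₁, …, gᵢ⟩]`, in which the next one becomes a unit
multiple of `X^a - 1` with `a` of infinite order, and no nonzero element of finite support is
invariant under translation by such an `a`.

Dividing a module by a regular element `x` raises the projective dimension by at most one. If `x`
kills `N`, the connecting maps `Ext^i(M, N) → Ext^{i+1}(M/xM, N)` are injective, so starting from
`Hom(k[G], k_ψ) ≠ 0` one reaches `Ext^n(k_ψ, k_ψ) ≠ 0`.
-/

universe u v

open CategoryTheory RingTheory.Sequence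

section ProjectiveDimension

theorem projDimLE_iff_hasProjectiveDimensionLE {R : Type u} [Ring R] [Small.{v} R] (n : ℕ)
    (M : Type v) [AddCommGroup M] [Module R M] :
    ProjDimLE R n M ↔ HasProjectiveDimensionLE (ModuleCat.of R M) n := by
  induction n generalizing M with
  | zero =>
    rw [ProjDimLE, IsProjective.iff_projective, projective_iff_hasProjectiveDimensionLE_zero]
  | succ n ih =>
    constructor
    · rintro ⟨P, _, _, f, hP, hf, hker⟩
      exact ((LinearMap.shortExact_shortComplexKer hf).hasProjectiveDimensionLT_X₃_iff n
        ((IsProjective.iff_projective P).1 hP)).2 ((ih _).1 hker)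
    · intro h
      let p := Projective.π (ModuleCat.of R M)
      have hp : Function.Surjective p.hom := (ModuleCat.epi_iff_surjective p).1 inferInstance
      have hP : Projective (Projective.over (ModuleCat.of R M)) := inferInstance
      exact ⟨_, inferInstance, inferInstance, p.hom, (IsProjective.iff_projective _).2 hP, hp,
        (ih _).2 (((LinearMap.shortExact_shortComplexKer hp).hasProjectiveDimensionLT_X₃_iff n
          hP).1 h)⟩

theorem hasProjectiveDimensionLE_quotient_ofList_smul_top {R : Type u} [CommRing R] (rs : List R)
    (M : ModuleCat.{v} R) (reg : IsWeaklyRegular M rs) (i : ℕ) [HasProjectiveDimensionLE M i] :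
    HasProjectiveDimensionLE
      (ModuleCat.of R (M ⧸ Ideal.ofList rs • (⊤ : Submodule R M))) (i + rs.length) := by
  induction rs generalizing M i with
  | nil =>
    exact hasProjectiveDimensionLT_of_iso
      (Submodule.quotEquivOfEqBot _ (by simp)).symm.toModuleIso _
  | cons x rs ih =>
    obtain ⟨hx, hrs⟩ := (isWeaklyRegular_cons_iff M x rs).1 reg
    have : HasProjectiveDimensionLE (ModuleCat.of R (QuotSMulTop x M)) (i + 1) :=
      hx.smulShortComplex_shortExact.hasProjectiveDimensionLT_X₃ (i + 1) ‹_›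
        (hasProjectiveDimensionLT_of_ge M (i + 1) _ (by lia))
    have := ih (ModuleCat.of R (QuotSMulTop x M)) hrs (i + 1)
    rw [List.length_cons, add_comm rs.length, ← add_assoc]
    exact hasProjectiveDimensionLT_of_iso
      (Submodule.quotOfListConsSMulTopEquivQuotSMulTopInner M x rs).symm.toModuleIso _

end ProjectiveDimension

section Ext

open Abelian

theorem nontrivial_ext_of_iso {C : Type*} [Category* C] [Abelian C] [HasExt C] {X X' : C}
    (e : X ≅ X') (Y : C) (i : ℕ) [Nontrivial (Ext X Y i)] : Nontrivial (Ext X' Y i) :=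
  let f : Ext X' Y i ≃ Ext X Y i :=
    (((extFunctor i).mapIso e.op).app Y).addCommGroupIsoToAddEquiv.toEquiv
  f.nontrivial

variable {R : Type u} [CommRing R] [Small.{v} R]

theorem ext_smul_eq_zero_of_mem_annihilator {M N : ModuleCat.{v} R} {x : R}
    (hx : x ∈ Module.annihilator R N) {i : ℕ} (e : Ext M N i) : x • e = 0 := by
  have hN : x • 𝟙 N = 0 := by
    ext y
    exact Module.mem_annihilator.1 hx y
  rw [Ext.smul_eq_comp_mk₀, hN, Ext.mk₀_zero, Ext.comp_zero]

theorem nontrivial_ext_quotSMulTop {M N : ModuleCat.{v} R} {x : R} (reg : IsSMulRegular M x)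
    (hx : x ∈ Module.annihilator R N) (i : ℕ) [Nontrivial (Ext M N i)] :
    Nontrivial (Ext (ModuleCat.of R (QuotSMulTop x M)) N (i + 1)) := by
  let δ : Ext M N i →+ Ext (ModuleCat.of R (QuotSMulTop x M)) N (i + 1) :=
    reg.smulShortComplex_shortExact.extClass.precomp N (add_comm 1 i)
  have hδ : Function.Injective δ := by
    refine (injective_iff_map_eq_zero δ).2 fun e he => ?_
    obtain ⟨z, rfl⟩ : ∃ z : Ext M N i, (Ext.mk₀ (x • 𝟙 M)).comp z (zero_add i) = e :=
      Ext.contravariant_sequence_exact₁ _ _ _ (add_comm 1 i) he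
    rw [Ext.mk₀_smul, Ext.smul_comp, Ext.mk₀_id_comp, ext_smul_eq_zero_of_mem_annihilator hx]
  exact hδ.nontrivial

theorem nontrivial_ext_quotient_ofList_smul_top (rs : List R) (M N : ModuleCat.{v} R)
    (reg : IsWeaklyRegular M rs) (hN : Ideal.ofList rs ≤ Module.annihilator R N) (i : ℕ)
    [Nontrivial (Ext M N i)] :
    Nontrivial (Ext (ModuleCat.of R (M ⧸ Ideal.ofList rs • (⊤ : Submodule R M))) N
      (i + rs.length)) := by
  induction rs generalizing M i with
  | nil =>
    exact nontrivial_ext_of_iso (Submodule.quotEquivOfEqBot _ (by simp)).symm.toModuleIso N _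
  | cons x rs ih =>
    obtain ⟨hx, hrs⟩ := (isWeaklyRegular_cons_iff M x rs).1 reg
    obtain ⟨hxN, hrsN⟩ := sup_le_iff.1 (Ideal.ofList_cons x rs ▸ hN)
    have : Nontrivial (Ext (ModuleCat.of R (QuotSMulTop x M)) N (i + 1)) :=
      nontrivial_ext_quotSMulTop hx ((Ideal.span_singleton_le_iff_mem _).1 hxN) i
    have := ih (ModuleCat.of R (QuotSMulTop x M)) hrs hrsN (i + 1)
    rw [List.length_cons, add_comm rs.length, ← add_assoc]
    exact nontrivial_ext_of_iso
      (Submodule.quotOfListConsSMulTopEquivQuotSMulTopInner M x rs).symm.toModuleIso N _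

end Ext

section RegularSequence

variable {R : Type u} [CommRing R] {rs : List R}

theorem isSMulRegular_quotient_ker {S : Type*} [Ring S] {φ : R →+* S} {x : R}
    (hx : IsSMulRegular S (φ x)) : IsSMulRegular (R ⧸ RingHom.ker φ) x := by
  refine (isSMulRegular_quotient_iff_mem_of_smul_mem _ x).2 fun y hy => ?_
  rw [RingHom.mem_ker] at hy ⊢
  exact hx.right_eq_zero_of_smul (by rwa [smul_eq_mul, ← map_mul])

theorem ofList_take_ofFn {n : ℕ} (f : Fin n → R) (j : ℕ) :
    Ideal.ofList ((List.ofFn f).take j) = Ideal.span (f '' {i | (i : ℕ) < j}) := by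
  refine congrArg Ideal.span (Set.ext fun r => ?_)
  simp only [Set.mem_ofPred_eq, Set.mem_image, List.mem_take_iff_getElem, List.length_ofFn,
    List.getElem_ofFn, lt_min_iff]
  constructor
  · rintro ⟨i, ⟨hj, hn⟩, rfl⟩
    exact ⟨⟨i, hn⟩, hj, rfl⟩
  · rintro ⟨i, hj, rfl⟩
    exact ⟨i, ⟨hj, i.2⟩, rfl⟩

theorem hasProjectiveDimensionLE_quotient_ofList_iff (reg : IsRegular R rs) (m : ℕ) :
    HasProjectiveDimensionLE (ModuleCat.of R (R ⧸ Ideal.ofList rs)) m ↔ rs.length ≤ m := by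
  let R₁ := ModuleCat.of R R
  let N := ModuleCat.of R (R ⧸ Ideal.ofList rs)
  have hI : Ideal.ofList rs • (⊤ : Submodule R R) = Ideal.ofList rs := by
    rw [smul_eq_mul, Ideal.mul_top]
  let e : ModuleCat.of R (R ⧸ Ideal.ofList rs • (⊤ : Submodule R R)) ≅ N :=
    (Submodule.quotEquivOfEq _ _ hI).toModuleIso
  constructor
  · intro h
    have : Nontrivial N := Ideal.Quotient.nontrivial_iff.2 (hI ▸ reg.top_ne_smul.symm)
    have : Nontrivial (Abelian.Ext R₁ N 0) :=
      ((Abelian.Ext.homEquiv₀.trans ModuleCat.homEquiv).trans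
        (LinearMap.ringLmapEquivSelf R ℕ N).toEquiv).nontrivial
    have := nontrivial_ext_quotient_ofList_smul_top rs R₁ N reg.toIsWeaklyRegular
      Ideal.annihilator_quotient.ge 0
    have := nontrivial_ext_of_iso e N (0 + rs.length)
    by_contra! hlt
    exact not_subsingleton (Abelian.Ext N N (0 + rs.length))
      (HasProjectiveDimensionLT.subsingleton N (m + 1) (0 + rs.length) (by lia) N)
  · intro h
    have : HasProjectiveDimensionLE R₁ 0 :=
      (projective_iff_hasProjectiveDimensionLE_zero R₁).1
        ((IsProjective.iff_projective R).1 inferInstance)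
    have := hasProjectiveDimensionLE_quotient_ofList_smul_top rs R₁ reg.toIsWeaklyRegular 0
    have := hasProjectiveDimensionLT_of_iso e (0 + rs.length + 1)
    exact hasProjectiveDimensionLT_of_ge N (0 + rs.length + 1) (m + 1) (by lia)

theorem projDimLE_compHom_iff {S : Type u} [CommRing S] [Nontrivial S] {f : R →+* S}
    (hf : Function.Surjective f) (reg : IsWeaklyRegular R rs)
    (hker : RingHom.ker f = Ideal.ofList rs) (m : ℕ) :
    letI : Module R S := Module.compHom S f
    ProjDimLE R m S ↔ rs.length ≤ m := by
  let _ : Module R S := Module.compHom S f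
  let p : R →ₗ[R] S :=
    { toFun := f
      map_add' := map_add f
      map_smul' := map_mul f }
  have hp : LinearMap.ker p = Ideal.ofList rs := hker
  let e : (R ⧸ Ideal.ofList rs) ≃ₗ[R] S :=
    (Submodule.quotEquivOfEq _ _ hp.symm).trans (p.quotKerEquivOfSurjective hf)
  have hreg : IsRegular R rs := by
    refine ⟨reg, fun h => RingHom.ker_ne_top f ?_⟩
    rw [hker, h, smul_eq_mul, Ideal.mul_top]
  rw [projDimLE_iff_hasProjectiveDimensionLE, ← hasProjectiveDimensionLE_quotient_ofList_iff hreg]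
  exact ⟨fun _ => hasProjectiveDimensionLT_of_iso e.toModuleIso.symm _,
    fun _ => hasProjectiveDimensionLT_of_iso e.toModuleIso _⟩

end RegularSequence

section GroupAlgebra

open AddMonoidAlgebra

theorem isSMulRegular_single_sub_one {R A : Type*} [Ring R] [AddCommGroup A] {a : A}
    (ha : addOrderOf a = 0) : IsSMulRegular R[A] (single a 1 - 1 : R[A]) := by
  refine isSMulRegular_iff_right_eq_zero_of_smul.2 fun r hr => ?_
  have hr' : single a 1 * r = r := by
    rwa [smul_eq_mul, sub_mul, one_mul, sub_eq_zero] at hr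
  have hshift (b : A) : r.coeff (b - a) = r.coeff b := by
    conv_rhs => rw [← hr', coeff_single_mul_apply, one_mul, neg_add_eq_sub]
  have hperiodic (b : A) (n : ℕ) : r.coeff (b - n • a) = r.coeff b := by
    induction n with
    | zero => rw [zero_smul, sub_zero]
    | succ n ih => rw [succ_nsmul, ← sub_sub, hshift, ih]
  ext b
  by_contra hb
  have hinj : Function.Injective fun n : ℕ => b - n • a :=
    sub_right_injective.comp
      (injective_nsmul_iff_not_isOfFinAddOrder.2 (addOrderOf_eq_zero_iff.1 ha))
  exact Set.infinite_of_injective_forall_mem hinj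
    (fun n => Finsupp.mem_support_iff.2 ((hperiodic b n).trans_ne hb)) r.coeff.support.finite_toSet

variable {k G : Type*} [CommRing k] [AddCommGroup G] (ψ : k[G] →ₐ[k] k)

/-- The element `X^g - ψ(X^g)` of `k[G]`; such elements generate the kernel of `ψ`. -/
noncomputable def characterRelator (g : G) : k[G] :=
  single g 1 - algebraMap k _ (ψ (single g 1))

theorem map_single_one_mul_map_single_neg (g : G) :
    ψ (single g 1) * ψ (single (-g) 1) = 1 := by
  rw [← map_mul, single_mul_single, add_neg_cancel, one_mul, ← one_def, map_one]

variable {ψ} in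
theorem characterRelator_mem_of_mem_closure {I : Ideal k[G]} {S : Set G}
    (hS : ∀ s ∈ S, characterRelator ψ s ∈ I) {g : G} (hg : g ∈ AddSubgroup.closure S) :
    characterRelator ψ g ∈ I := by
  induction hg using AddSubgroup.closure_induction with
  | mem s hs => exact hS s hs
  | zero =>
    rw [characterRelator, ← one_def, map_one, map_one, sub_self]
    exact I.zero_mem
  | add g h _ _ hg hh =>
    have hadd : characterRelator ψ (g + h) = single g 1 * characterRelator ψ h +
        algebraMap k _ (ψ (single h 1)) * characterRelator ψ g := by
      have hsingle : (single (g + h) 1 : k[G]) = single g 1 * single h 1 := by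
        rw [single_mul_single, one_mul]
      simp only [characterRelator, hsingle, map_mul]
      ring
    rw [hadd]
    exact I.add_mem (I.mul_mem_left _ hh) (I.mul_mem_left _ hg)
  | neg g _ hg =>
    have hneg : characterRelator ψ (-g) =
        -(single (-g) 1 * algebraMap k _ (ψ (single (-g) 1))) * characterRelator ψ g := by
      have h₁ : (single g 1 * single (-g) 1 : k[G]) = 1 := by
        rw [single_mul_single, add_neg_cancel, one_mul, one_def]
      have h₂ := congrArg (algebraMap k k[G]) (map_single_one_mul_map_single_neg ψ g)
      rw [map_mul, map_one] at h₂
      simp only [characterRelator]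
      linear_combination algebraMap k _ (ψ (single (-g) 1)) * h₁ - single (-g) 1 * h₂
    rw [hneg]
    exact I.mul_mem_left _ hg

/-- The algebra map `k[G] → k[G ⧸ H]` sending `X^g` to `ψ(X^g) X^[g]`: the projection twisted by
`ψ`, so that `X^h` becomes the scalar `ψ(X^h)` for `h ∈ H`. -/
noncomputable def twistedProj (H : AddSubgroup G) : k[G] →ₐ[k] k[G ⧸ H] :=
  lift k _ G
    { toFun := fun g => single (g.toAdd : G ⧸ H) (ψ (single g.toAdd 1))
      map_one' := by
        rw [toAdd_one, ← one_def, map_one]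
        rfl
      map_mul' := fun g h => by
        rw [single_mul_single, ← map_mul, single_mul_single, one_mul]
        rfl }

theorem twistedProj_single (H : AddSubgroup G) (g : G) (c : k) :
    twistedProj ψ H (single g c) = single (g : G ⧸ H) (c * ψ (single g 1)) :=
  (lift_single _ _ _).trans (smul_single' _ _ _)

theorem twistedProj_characterRelator (H : AddSubgroup G) (g : G) :
    twistedProj ψ H (characterRelator ψ g) =
      algebraMap k _ (ψ (single g 1)) * (single (g : G ⧸ H) 1 - 1) := by
  rw [characterRelator, map_sub, AlgHom.commutes, twistedProj_single, one_mul, mul_sub, mul_one,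
    coe_algebraMap]
  simp [single_mul_single]

theorem exists_comp_twistedProj_eq_mkₐ {H : AddSubgroup G} {I : Ideal k[G]}
    (hI : ∀ h ∈ H, characterRelator ψ h ∈ I) :
    ∃ ρ : k[G ⧸ H] →ₐ[k] k[G] ⧸ I, ρ.comp (twistedProj ψ H) = Ideal.Quotient.mkₐ k I := by
  let untwist : G →+ Additive (k[G] ⧸ I) :=
    { toFun := fun g => Additive.ofMul (Ideal.Quotient.mk I (single g (ψ (single (-g) 1))))
      map_zero' := by
        rw [neg_zero, ← one_def, map_one, ← one_def, map_one, ofMul_one]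
      map_add' := fun g h => by
        rw [← ofMul_mul, ← map_mul, single_mul_single, ← map_mul, single_mul_single, neg_add,
          one_mul] }
  have hH : H ≤ untwist.ker := fun h hh => by
    have hmem := I.mul_mem_left (algebraMap k _ (ψ (single (-h) 1))) (hI h hh)
    refine congrArg Additive.ofMul ((Ideal.Quotient.eq (y := 1)).2 ?_)
    convert hmem using 1
    rw [characterRelator, mul_sub, ← map_mul, mul_comm (ψ (single (-h) 1)),
      map_single_one_mul_map_single_neg, map_one, coe_algebraMap]
    simp [single_mul_single]
  let ρ : k[G ⧸ H] →ₐ[k] k[G] ⧸ I :=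
    lift k _ _ (AddMonoidHom.toMultiplicativeLeft (QuotientAddGroup.lift H untwist hH))
  refine ⟨ρ, algHom_ext (fun g => ?_) (by ext)⟩
  have h : ψ (single g 1) • Ideal.Quotient.mk I (single g (ψ (single (-g) 1))) =
      Ideal.Quotient.mk I (single g 1) := by
    rw [← Ideal.Quotient.mkₐ_eq_mk k, ← map_smul, smul_single', map_single_one_mul_map_single_neg]
  rw [AlgHom.comp_apply, twistedProj_single, one_mul]
  exact (lift_single _ _ _).trans h

theorem isSMulRegular_twistedProj_characterRelator {H : AddSubgroup G} {g : G}
    (hg : addOrderOf (g : G ⧸ H) = 0) :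
    IsSMulRegular (k[G ⧸ H]) (twistedProj ψ H (characterRelator ψ g)) := by
  have hunit : IsUnit (ψ (single g 1)) :=
    IsUnit.of_mul_eq_one _ (map_single_one_mul_map_single_neg ψ g)
  rw [twistedProj_characterRelator]
  exact ((hunit.map (algebraMap k _)).isSMulRegular _).mul (isSMulRegular_single_sub_one hg)

theorem ker_twistedProj_closure (S : Set G) :
    RingHom.ker (twistedProj ψ (AddSubgroup.closure S)) =
      Ideal.span (characterRelator ψ '' S) := by
  apply le_antisymm
  · obtain ⟨ρ, hρ⟩ := exists_comp_twistedProj_eq_mkₐ ψ (H := AddSubgroup.closure S)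
      (I := Ideal.span (characterRelator ψ '' S)) fun h =>
        characterRelator_mem_of_mem_closure fun s hs =>
          Ideal.subset_span (Set.mem_image_of_mem _ hs)
    intro r (hr : twistedProj ψ _ r = 0)
    rw [← Ideal.Quotient.eq_zero_iff_mem, ← Ideal.Quotient.mkₐ_eq_mk k, ← hρ,
      AlgHom.comp_apply, hr, map_zero]
  · rw [Ideal.span_le]
    rintro _ ⟨s, hs, rfl⟩
    have : (s : G ⧸ AddSubgroup.closure S) = 0 :=
      (QuotientAddGroup.eq_zero_iff s).2 (AddSubgroup.subset_closure hs)
    change twistedProj ψ _ (characterRelator ψ s) = 0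
    rw [twistedProj_characterRelator, this, ← one_def, sub_self, mul_zero]

theorem ker_eq_span_characterRelator {S : Set G} (hS : AddSubgroup.closure S = ⊤) :
    RingHom.ker ψ = Ideal.span (characterRelator ψ '' S) := by
  apply le_antisymm
  · let I := Ideal.span (characterRelator ψ '' S)
    have hmem (g : G) : characterRelator ψ g ∈ I :=
      characterRelator_mem_of_mem_closure
        (fun s hs => Ideal.subset_span (Set.mem_image_of_mem _ hs)) (hS ▸ AddSubgroup.mem_top g)
    have hI : Ideal.Quotient.mkₐ k I = (Algebra.ofId k _).comp ψ :=
      algHom_ext (fun g => Ideal.Quotient.eq.2 (hmem g)) (by ext)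
    intro r (hr : ψ r = 0)
    rw [← Ideal.Quotient.eq_zero_iff_mem, ← Ideal.Quotient.mkₐ_eq_mk k, hI,
      AlgHom.comp_apply, hr, map_zero]
  · rw [Ideal.span_le]
    rintro _ ⟨s, -, rfl⟩
    change ψ (characterRelator ψ s) = 0
    rw [characterRelator, map_sub, AlgHom.commutes, Algebra.algebraMap_self, RingHom.id_apply,
      sub_self]

theorem addOrderOf_mk_closure_eq_zero {ι : Type*} {v : ι → G} (hv : LinearIndependent ℤ v)
    {s : Set ι} {i : ι} (hi : i ∉ s) :
    addOrderOf (v i : G ⧸ AddSubgroup.closure (v '' s)) = 0 := by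
  refine addOrderOf_eq_zero_iff'.2 fun n hn h => hn.ne' ?_
  have hs : s ⊆ Set.univ \ {i} := fun j hj => ⟨trivial, ne_of_mem_of_not_mem hj hi⟩
  have hclosure : n • v i ∈ AddSubgroup.closure (v '' s) := (QuotientAddGroup.eq_zero_iff _).1 h
  rw [← Submodule.span_int_eq_addSubgroupClosure, Submodule.mem_toAddSubgroup,
    ← natCast_zsmul] at hclosure
  exact_mod_cast hv.eq_zero_of_smul_mem_span i n
    (Submodule.span_mono (Set.image_mono hs) hclosure)

variable {n : ℕ} {v : Fin n → G}

theorem isWeaklyRegular_ofFn_characterRelator (hv : LinearIndependent ℤ v) :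
    IsWeaklyRegular k[G] (List.ofFn fun i => characterRelator ψ (v i)) := by
  refine (isWeaklyRegular_iff _ _).2 fun i hi => ?_
  rw [List.length_ofFn] at hi
  let H := AddSubgroup.closure (v '' {j | (j : ℕ) < i})
  have hker : RingHom.ker (twistedProj ψ H) =
      Ideal.ofList ((List.ofFn fun j => characterRelator ψ (v j)).take i) := by
    rw [ker_twistedProj_closure, ofList_take_ofFn, Set.image_image]
  have horder : addOrderOf (v ⟨i, hi⟩ : G ⧸ H) = 0 :=
    addOrderOf_mk_closure_eq_zero hv (lt_irrefl i)
  rw [List.getElem_ofFn, smul_eq_mul, Ideal.mul_top, ← hker]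
  exact isSMulRegular_quotient_ker (isSMulRegular_twistedProj_characterRelator ψ horder)

end GroupAlgebra

theorem laurent_character_projective_dimension_general {k G : Type u} [CommRing k] [Nontrivial k]
    [AddCommGroup G] [Module.Free ℤ G] [Module.Finite ℤ G] (ψ : AddMonoidAlgebra k G →ₐ[k] k)
    (m : ℕ) :
    letI : Module (AddMonoidAlgebra k G) k := Module.compHom k ψ.toRingHom
    ProjDimLE (AddMonoidAlgebra k G) m k ↔ Module.finrank ℤ G ≤ m := by
  let b := Module.finBasis ℤ G
  let rs := List.ofFn fun i => characterRelator ψ (b i)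
  have hψ : Function.Surjective ψ := fun c => ⟨algebraMap k _ c, ψ.commutes c⟩
  have hclosure : AddSubgroup.closure (Set.range b) = ⊤ := by
    rw [← Submodule.span_int_eq_addSubgroupClosure, b.span_eq, Submodule.top_toAddSubgroup]
  have hker : RingHom.ker ψ = Ideal.ofList rs := by
    rw [ker_eq_span_characterRelator ψ hclosure, ← Set.range_comp]
    exact congrArg Ideal.span (Set.ext fun x => (List.mem_ofFn' _ x).symm)
  have hlength : rs.length = Module.finrank ℤ G := List.length_ofFn
  rw [← hlength]
  exact projDimLE_compHom_iff hψ (isWeaklyRegular_ofFn_characterRelator ψ b.linearIndependent)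
    hker m

/-- Let `k` be a field, `n` a natural number,
`R = k[X₁^{±1}, …, Xₙ^{±1}]`, and `ψ : R → k` a `k`-algebra homomorphism; let `k_ψ` be the
one-dimensional `R`-module `k` with `R` acting through `ψ`.  Then `k_ψ` has projective
dimension exactly `n` over `R`: it has projective dimension `≤ n`, and when `n ≥ 1` it does
not have projective dimension `≤ n - 1`. -/
theorem laurent_character_projective_dimension (k : Type) [Field k] (n : ℕ)
    (ψ : LaurentAlgebra k n →ₐ[k] k) :
    letI : Module (LaurentAlgebra k n) k := Module.compHom k ψ.toRingHom
    ProjDimLE (LaurentAlgebra k n) n k ∧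
      (1 ≤ n → ¬ ProjDimLE (LaurentAlgebra k n) (n - 1) k) := by
  have h (m : ℕ) := laurent_character_projective_dimension_general ψ m
  rw [Module.finrank_fin_fun] at h
  exact ⟨(h n).2 le_rfl, fun hn hle => by have := (h (n - 1)).1 hle; lia⟩
end
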